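/- Let X, Y, Z be real Banach spaces, let U ⊆ X and V ⊆ Y be open neighborhoods of the origins, let n ∈ ℕ, and let G : U × V → Z and F : Z × U × V → ℝⁿ be continuously Fréchet differentiable maps satisfying: G(0,0) = 0; F(0,x,y) = 0 for all (x,y) ∈ U × V; and F(G(x,y),x,y) = 0 for all (x,y) ∈ U × V. Assume moreover that the partial Fréchet derivative D_yG(0,0) : Y → Z is injective, that the range of D_yG(0,0) has codimension n in Z, and that D_zF(0,0,0) : Z → ℝⁿ is surjective. Then there exist open neighborhoods Ũ ⊆ U and Ṽ ⊆ V of the origins and a continuously differentiable map g : Ũ → Ṽ such that g(0) = 0 and G(x, g(x)) = 0 for all x ∈ Ũ; moreover every (x,y) ∈ Ũ × Ṽ with G(x,y) = 0 satisfies y = g(x), and the derivative of g at 0 satisfies D_xG(0,0) + D_yG(0,0) ∘ D_xg(0) = 0. -/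

import Mathlib

open Set

/-!
Choose a continuous left inverse `S` of `D_yG(0,0)` on whose kernel `D_zF(0,0,0)` is bounded below:
differentiating `F(G(p), p) = F(0, p)` gives `D_zF ∘ D_yG = 0`, so by the dimension count the
sequence `Y → Z → ℝⁿ` is exact, and a right inverse of `D_zF` splits it. The classical implicit
function theorem applies to `S ∘ G`, whose partial derivative in `y` is the identity. Its zeros are
zeros of `G`: if `S(G(p)) = 0`, then `G(p)` is a small vector on which `D_zF` is bounded below, and
`F(·, p)` takes the same value at `G(p)` and at `0`, so strict differentiability of `F` forces
`G(p) = 0`.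
-/

section LinearAlgebra

open Module

theorem exact_of_comp_eq_zero_of_finrank_quotient_range_eq {K M N P : Type*} [DivisionRing K]
    [AddCommGroup M] [Module K M] [AddCommGroup N] [Module K N] [AddCommGroup P] [Module K P]
    {f : M →ₗ[K] N} {g : N →ₗ[K] P} [FiniteDimensional K (N ⧸ LinearMap.range f)]
    [FiniteDimensional K P] (hgf : g ∘ₗ f = 0) (hg : Function.Surjective g)
    (hrank : finrank K (N ⧸ LinearMap.range f) = finrank K P) :
    Function.Exact f g := by
  have hle : LinearMap.range f ≤ LinearMap.ker g := LinearMap.range_le_ker_iff.2 hgf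
  have hlift_surj : Function.Surjective ((LinearMap.range f).liftQ g hle) :=
    LinearMap.range_eq_top.1 (by rw [Submodule.range_liftQ, LinearMap.range_eq_top.2 hg])
  have hlift_inj : Function.Injective ((LinearMap.range f).liftQ g hle) :=
    (LinearMap.injective_iff_surjective_of_finrank_eq_finrank hrank).2 hlift_surj
  refine LinearMap.exact_of_comp_eq_zero_of_ker_le_range hgf fun z hz => ?_
  rw [← Submodule.Quotient.mk_eq_zero]
  exact hlift_inj (by simpa using hz)

theorem exists_leftInverse_norm_le_on_ker_of_exact {𝕜 Y Z W : Type*} [NontriviallyNormedField 𝕜]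
    [NormedAddCommGroup Y] [NormedSpace 𝕜 Y] [CompleteSpace Y]
    [NormedAddCommGroup Z] [NormedSpace 𝕜 Z] [CompleteSpace Z]
    [NormedAddCommGroup W] [NormedSpace 𝕜 W] {T : Y →L[𝕜] Z} {Q : Z →L[𝕜] W}
    (hT : Function.Injective T) (hTQ : Function.Exact T Q) (hQ : Q.HasRightInverse) :
    ∃ (S : Z →L[𝕜] Y) (K : ℝ), Function.LeftInverse S T ∧ ∀ z, S z = 0 → ‖z‖ ≤ K * ‖Q z‖ := by
  obtain ⟨R, hR⟩ := hQ
  have hrange : T.range = Q.ker := (LinearMap.exact_iff.1 hTQ).symm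
  have hclosed : IsClosed (range T) := by
    have : (range T : Set Z) = Q.ker := congrArg SetLike.coe hrange
    exact this ▸ Q.isClosed_ker
  obtain ⟨S, hS⟩ : T.HasLeftInverse :=
    .of_injective_of_isClosed_range_of_closedComplement_range hT hclosed
      (hrange ▸ Q.closedComplemented_ker_of_rightInverse R hR)
  -- Precomposing with the projection `1 - R ∘ Q` moves the kernel of the left inverse to `range R`.
  refine ⟨S ∘L (.id 𝕜 Z - R ∘L Q), ‖R‖, fun y => ?_, fun z hz => ?_⟩
  · simp [hTQ.apply_apply_eq_zero, hS y]
  · obtain ⟨y, hy⟩ : z - R (Q z) ∈ range T := (hTQ _).1 (by simp [hR (Q z)])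
    have hy0 : y = 0 := by
      rw [← hS y, hy]
      simpa using hz
    have hz_eq : z = R (Q z) := by
      rw [← sub_eq_zero, ← hy, hy0, map_zero]
    calc ‖z‖ = ‖R (Q z)‖ := congrArg norm hz_eq
      _ ≤ ‖R‖ * ‖Q z‖ := R.le_opNorm _

end LinearAlgebra

section Topology

open scoped Topology

theorem exists_isOpen_prod_subset_mapsTo {X Y : Type*} [TopologicalSpace X] [TopologicalSpace Y]
    {g : X → Y} {a : X} {s : Set (X × Y)} {t : Set X} (hg : ContinuousAt g a)
    (hs : s ∈ 𝓝 (a, g a)) (ht : t ∈ 𝓝 a) :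
    ∃ (U : Set X) (V : Set Y), IsOpen U ∧ IsOpen V ∧ a ∈ U ∧ g a ∈ V ∧ U ⊆ t ∧ U ×ˢ V ⊆ s ∧
      MapsTo g U V := by
  obtain ⟨U₀, V, hU₀, haU₀, hV, hgaV, hsub⟩ := mem_nhds_prod_iff'.1 hs
  obtain ⟨U, hUsub, hU, haU⟩ := mem_nhds_iff.1
    (Filter.inter_mem (Filter.inter_mem (hU₀.mem_nhds haU₀) ht) (hg (hV.mem_nhds hgaV)))
  exact ⟨U, V, hU, hV, haU, hgaV, fun x hx => (hUsub hx).1.2,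
    (prod_mono (fun x hx => (hUsub hx).1.1) Subset.rfl).trans hsub, fun x hx => (hUsub hx).2⟩

end Topology

section PartialDerivatives

open ContinuousLinearMap
open scoped Topology

variable {𝕜 E F G : Type*} [NontriviallyNormedField 𝕜]
  [NormedAddCommGroup E] [NormedSpace 𝕜 E] [NormedAddCommGroup F] [NormedSpace 𝕜 F]
  [NormedAddCommGroup G] [NormedSpace 𝕜 G]
  {f : E × F → G} {f' : E × F →L[𝕜] G} {A : E →L[𝕜] G} {B : F →L[𝕜] G} {a : E} {b : F}

theorem comp_inl_eq_of_hasFDerivAt (hf : HasFDerivAt f f' (a, b))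
    (hA : HasFDerivAt (fun x => f (x, b)) A a) : f' ∘L inl 𝕜 E F = A :=
  (hf.comp a (hasFDerivAt_prodMk_left a b)).unique hA

theorem comp_inr_eq_of_hasFDerivAt (hf : HasFDerivAt f f' (a, b))
    (hB : HasFDerivAt (fun y => f (a, y)) B b) : f' ∘L inr 𝕜 E F = B :=
  (hf.comp b (hasFDerivAt_prodMk_right a b)).unique hB

theorem eq_coprod_of_hasFDerivAt (hf : HasFDerivAt f f' (a, b))
    (hA : HasFDerivAt (fun x => f (x, b)) A a) (hB : HasFDerivAt (fun y => f (a, y)) B b) :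
    f' = A.coprod B := by
  rw [← comp_inl_eq_of_hasFDerivAt hf hA, ← comp_inr_eq_of_hasFDerivAt hf hB,
    ← comp_coprod, coprod_inl_inr, comp_id]

theorem add_comp_eq_zero_of_eventually_apply_graph_eq {g : E → F} {g' : E →L[𝕜] F} {c : G}
    (hf : DifferentiableAt 𝕜 f (a, g a)) (hA : HasFDerivAt (fun x => f (x, g a)) A a)
    (hB : HasFDerivAt (fun y => f (a, y)) B (g a)) (hg : HasFDerivAt g g' a)
    (hfg : ∀ᶠ x in 𝓝 a, f (x, g x) = c) : A + B ∘L g' = 0 := by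
  have hgraph : HasFDerivAt (fun x => f (x, g x)) (fderiv 𝕜 f (a, g a) ∘L (.prod (.id 𝕜 E) g')) a :=
    hf.hasFDerivAt.comp a ((hasFDerivAt_id a).prodMk hg)
  have hconst : HasFDerivAt (fun x => f (x, g x)) (0 : E →L[𝕜] G) a :=
    (hasFDerivAt_const c a).congr_of_eventuallyEq hfg
  rw [← hgraph.unique hconst, eq_coprod_of_hasFDerivAt hf.hasFDerivAt hA hB]
  ext x
  simp

theorem comp_eq_zero_of_eventually_apply_eq_const {u : F → E} {u' : F →L[𝕜] E}
    (hf : DifferentiableAt 𝕜 f (a, b)) (hA : HasFDerivAt (fun x => f (x, b)) A a)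
    (hu : HasFDerivAt u u' b) (hub : u b = a) (hfu : ∀ᶠ y in 𝓝 b, f (u y, y) = f (a, y)) :
    A ∘L u' = 0 := by
  subst hub
  have hgraph : HasFDerivAt (fun y => f (u y, y)) (fderiv 𝕜 f (u b, b) ∘L (u'.prod (.id 𝕜 F))) b :=
    HasFDerivAt.comp (f := fun y => (u y, y)) b hf.hasFDerivAt (hu.prodMk (hasFDerivAt_id b))
  have hslice : HasFDerivAt (fun y => f (u b, y)) (fderiv 𝕜 f (u b, b) ∘L inr 𝕜 E F) b :=
    hf.hasFDerivAt.comp b (hasFDerivAt_prodMk_right (u b) b)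
  have hderiv := hgraph.unique (hslice.congr_of_eventuallyEq hfu)
  rw [← comp_inl_eq_of_hasFDerivAt hf.hasFDerivAt hA]
  ext y
  have hy : fderiv 𝕜 f (u b, b) (u' y, y) = fderiv 𝕜 f (u b, b) (0, y) := congr($hderiv y)
  simpa [← map_sub] using sub_eq_zero.2 hy

end PartialDerivatives

section StrictDerivative

open scoped Topology

variable {𝕜 E F : Type*} [NontriviallyNormedField 𝕜]
  [NormedAddCommGroup E] [NormedSpace 𝕜 E] [NormedAddCommGroup F] [NormedSpace 𝕜 F]

theorem eventually_eq_of_apply_eq_of_hasStrictFDerivAt {f : E → F} {f' : E →L[𝕜] F} {a : E}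
    (hf : HasStrictFDerivAt f f' a) (K : ℝ) :
    ∀ᶠ q in 𝓝 (a, a), ‖q.1 - q.2‖ ≤ K * ‖f' (q.1 - q.2)‖ → f q.1 = f q.2 → q.1 = q.2 := by
  have hc : (0 : ℝ) < (|K| + 1)⁻¹ := by positivity
  filter_upwards [hf.isLittleO.def hc] with q hq hK hfq
  rw [hfq, sub_self, zero_sub, norm_neg, le_inv_mul_iff₀ (by positivity)] at hq
  have hK' : K * ‖f' (q.1 - q.2)‖ ≤ |K| * ‖f' (q.1 - q.2)‖ := by gcongr; exact le_abs_self K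
  have hderiv : ‖f' (q.1 - q.2)‖ = 0 := le_antisymm (by linarith) (norm_nonneg _)
  rw [hderiv, mul_zero] at hK
  exact sub_eq_zero.1 (norm_le_zero_iff.1 hK)

theorem eventually_eq_zero_of_norm_le_of_apply_eq {Z W P : Type*}
    [NormedAddCommGroup Z] [NormedSpace 𝕜 Z] [NormedAddCommGroup W] [NormedSpace 𝕜 W]
    [NormedAddCommGroup P] [NormedSpace 𝕜 P] {Φ : Z × P → W} {Φ' : Z × P →L[𝕜] W} {A : Z →L[𝕜] W}
    {u : P → Z} {p₀ : P} (hΦ : HasStrictFDerivAt Φ Φ' (0, p₀))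
    (hA : HasFDerivAt (fun z => Φ (z, p₀)) A 0) (hu : ContinuousAt u p₀) (hu₀ : u p₀ = 0)
    (hΦu : ∀ᶠ p in 𝓝 p₀, Φ (u p, p) = Φ (0, p)) (K : ℝ) :
    ∀ᶠ p in 𝓝 p₀, ‖u p‖ ≤ K * ‖A (u p)‖ → u p = 0 := by
  have hpair : Filter.Tendsto (fun p => ((u p, p), ((0 : Z), p))) (𝓝 p₀)
      (𝓝 ((0, p₀), (0, p₀))) := by
    have hcont : ContinuousAt (fun p => ((u p, p), ((0 : Z), p))) p₀ := by fun_prop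
    simpa only [hu₀] using hcont.tendsto
  filter_upwards [hpair.eventually (eventually_eq_of_apply_eq_of_hasStrictFDerivAt hΦ K), hΦu]
    with p hp hΦp hbound
  have hA_apply : Φ' (u p, 0) = A (u p) :=
    congr($(comp_inl_eq_of_hasFDerivAt hΦ.hasFDerivAt hA) (u p))
  have heq : (u p, p) = (0, p) := hp (by simpa [Prod.norm_def, hA_apply] using hbound) hΦp
  exact congrArg Prod.fst heq

end StrictDerivative

section ImplicitFunction

open scoped Topology ContDiff

variable {𝕜 X Y Z W : Type*} [RCLike 𝕜]
  [NormedAddCommGroup X] [NormedSpace 𝕜 X] [CompleteSpace X]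
  [NormedAddCommGroup Y] [NormedSpace 𝕜 Y] [CompleteSpace Y]
  [NormedAddCommGroup Z] [NormedSpace 𝕜 Z] [NormedAddCommGroup W] [NormedSpace 𝕜 W]
  {k : ℕ∞ω} {G : X × Y → Z} {a : X} {b : Y} {DyG : Y →L[𝕜] Z} {S : Z →L[𝕜] Y}

theorem exists_contDiffAt_eventually_eq_zero_iff_of_leftInverse (hk : k ≠ 0)
    (hG : ContDiffAt 𝕜 k G (a, b)) (hGab : G (a, b) = 0)
    (hDyG : HasFDerivAt (fun y => G (a, y)) DyG b) (hS : Function.LeftInverse S DyG)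
    (hSG : ∀ᶠ p in 𝓝 (a, b), S (G p) = 0 → G p = 0) :
    ∃ g : X → Y, ContDiffAt 𝕜 k g a ∧ g a = b ∧ ∀ᶠ p in 𝓝 (a, b), G p = 0 ↔ g p.1 = p.2 := by
  have hSG_contDiff : ContDiffAt 𝕜 k (S ∘ G) (a, b) := S.contDiff.contDiffAt.comp _ hG
  have hSG_partial : fderiv 𝕜 (S ∘ G) (a, b) ∘L .inr 𝕜 X Y = .id 𝕜 Y := by
    rw [comp_inr_eq_of_hasFDerivAt (hSG_contDiff.differentiableAt hk).hasFDerivAt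
      (S.hasFDerivAt.comp b hDyG)]
    exact ContinuousLinearMap.ext hS
  have hinv : (fderiv 𝕜 (S ∘ G) (a, b) ∘L .inr 𝕜 X Y).IsInvertible :=
    hSG_partial ▸ ⟨.refl 𝕜 Y, rfl⟩
  refine ⟨hSG_contDiff.implicitFunction hk hinv, hSG_contDiff.contDiffAt_implicitFunction hk hinv,
    hSG_contDiff.implicitFunction_apply_self hk hinv, ?_⟩
  filter_upwards [hSG_contDiff.eventually_apply_eq_iff_implicitFunction hk hinv, hSG] with p hp hSGp
  rw [← hp, Function.comp_apply, Function.comp_apply, hGab, map_zero]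
  exact ⟨fun h => by rw [h, map_zero], hSGp⟩

theorem modified_implicit_function_theorem_general {F : Z × X × Y → W} {F' : Z × X × Y →L[𝕜] W}
    {U : Set X} {V : Set Y} {DxG : X →L[𝕜] Z} {DzF : Z →L[𝕜] W} {K : ℝ}
    (hk : k ≠ 0) (hk_top : k ≠ ∞) (hU : U ∈ 𝓝 a) (hV : V ∈ 𝓝 b)
    (hG : ContDiffAt 𝕜 k G (a, b)) (hF : HasStrictFDerivAt F F' (0, a, b)) (hGab : G (a, b) = 0)
    (hFG : ∀ᶠ p in 𝓝 (a, b), F (G p, p) = F (0, p))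
    (hDxG : HasFDerivAt (fun x => G (x, b)) DxG a) (hDyG : HasFDerivAt (fun y => G (a, y)) DyG b)
    (hDzF : HasFDerivAt (fun z => F (z, a, b)) DzF 0)
    (hS : Function.LeftInverse S DyG) (hSK : ∀ z, S z = 0 → ‖z‖ ≤ K * ‖DzF z‖) :
    ∃ (U' : Set X) (V' : Set Y) (g : X → Y),
      IsOpen U' ∧ IsOpen V' ∧ a ∈ U' ∧ b ∈ V' ∧ U' ⊆ U ∧ V' ⊆ V ∧
      ContDiffOn 𝕜 k g U' ∧ g a = b ∧
      (∀ x ∈ U', g x ∈ V' ∧ G (x, g x) = 0) ∧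
      (∀ x ∈ U', ∀ y ∈ V', G (x, y) = 0 → y = g x) ∧
      ∃ Dg : X →L[𝕜] Y, HasFDerivAt g Dg a ∧ ∀ x, DxG x + DyG (Dg x) = 0 := by
  have hSG : ∀ᶠ p in 𝓝 (a, b), S (G p) = 0 → G p = 0 :=
    (eventually_eq_zero_of_norm_le_of_apply_eq hF hDzF hG.continuousAt hGab hFG K).mono
      fun p hp hSp => hp (hSK _ hSp)
  obtain ⟨g, hg, rfl, hzero⟩ :=
    exists_contDiffAt_eventually_eq_zero_iff_of_leftInverse hk hG hGab hDyG hS hSG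
  obtain ⟨t, ht, hgt⟩ := hg.contDiffOn le_rfl fun h => absurd h hk_top
  obtain ⟨U', V', hU', hV', haU', hgaV', hU't, hsub, hmaps⟩ :=
    exists_isOpen_prod_subset_mapsTo hg.continuousAt
      (Filter.inter_mem hzero (prod_mem_nhds hU hV)) ht
  have hzero' : ∀ x ∈ U', ∀ y ∈ V', G (x, y) = 0 ↔ g x = y := fun x hx y hy => (hsub ⟨hx, hy⟩).1
  have hGg : ∀ x ∈ U', G (x, g x) = 0 := fun x hx => (hzero' x hx _ (hmaps hx)).2 rfl
  have hDg : HasFDerivAt g (fderiv 𝕜 g a) a := (hg.differentiableAt hk).hasFDerivAt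
  have hDG := add_comp_eq_zero_of_eventually_apply_graph_eq (hG.differentiableAt hk) hDxG hDyG hDg
    (Filter.mem_of_superset (hU'.mem_nhds haU') hGg)
  exact ⟨U', V', g, hU', hV', haU', hgaV', fun x hx => (hsub (mk_mem_prod hx hgaV')).2.1,
    fun y hy => (hsub (mk_mem_prod haU' hy)).2.2, hgt.mono hU't, rfl,
    fun x hx => ⟨hmaps hx, hGg x hx⟩,
    fun x hx y hy h => ((hzero' x hx y hy).1 h).symm, _, hDg, fun x => congr($hDG x)⟩

end ImplicitFunction

/-- A generalization of the implicit function theorem in which the partial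
derivative `D_y G(0,0)` fails to be surjective by exactly `n` dimensions, the
deficiency being explained by the nonlinear identity `F(G(x,y),x,y) = 0`. -/
theorem modified_implicit_function_theorem
    {X Y Z : Type*}
    [NormedAddCommGroup X] [NormedSpace ℝ X] [CompleteSpace X]
    [NormedAddCommGroup Y] [NormedSpace ℝ Y] [CompleteSpace Y]
    [NormedAddCommGroup Z] [NormedSpace ℝ Z] [CompleteSpace Z]
    (n : ℕ)
    (U : Set X) (V : Set Y) (hU : IsOpen U) (hV : IsOpen V)
    (hU0 : (0 : X) ∈ U) (hV0 : (0 : Y) ∈ V)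
    (G : X × Y → Z) (F : Z × X × Y → (Fin n → ℝ))
    (hG : ContDiffOn ℝ 1 G (U ×ˢ V))
    (hF : ContDiffOn ℝ 1 F ((univ : Set Z) ×ˢ U ×ˢ V))
    (hG00 : G (0, 0) = 0)
    (hF0 : ∀ x ∈ U, ∀ y ∈ V, F (0, x, y) = 0)
    (hFG : ∀ x ∈ U, ∀ y ∈ V, F (G (x, y), x, y) = 0)
    (DxG : X →L[ℝ] Z) (DyG : Y →L[ℝ] Z) (DzF : Z →L[ℝ] (Fin n → ℝ))
    (hDxG : HasFDerivAt (fun x => G (x, 0)) DxG 0)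
    (hDyG : HasFDerivAt (fun y => G (0, y)) DyG 0)
    (hDzF : HasFDerivAt (fun z => F (z, 0, 0)) DzF 0)
    (hinj : Function.Injective DyG)
    (hcodim : Module.rank ℝ (Z ⧸ LinearMap.range (DyG : Y →ₗ[ℝ] Z)) = n)
    (hsurj : Function.Surjective DzF) :
    ∃ (U' : Set X) (V' : Set Y) (g : X → Y),
      IsOpen U' ∧ IsOpen V' ∧ (0 : X) ∈ U' ∧ (0 : Y) ∈ V' ∧ U' ⊆ U ∧ V' ⊆ V ∧
      ContDiffOn ℝ 1 g U' ∧ g 0 = 0 ∧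
      (∀ x ∈ U', g x ∈ V' ∧ G (x, g x) = 0) ∧
      (∀ x ∈ U', ∀ y ∈ V', G (x, y) = 0 → y = g x) ∧
      ∃ Dg : X →L[ℝ] Y, HasFDerivAt g Dg 0 ∧ ∀ x, DxG x + DyG (Dg x) = 0 := by
  have hUV : U ×ˢ V ∈ nhds (0, 0) := (hU.prod hV).mem_nhds ⟨hU0, hV0⟩
  have hG_at : ContDiffAt ℝ 1 G (0, 0) := hG.contDiffAt hUV
  have hF_at : ContDiffAt ℝ 1 F (0, 0, 0) := hF.contDiffAt (prod_mem_nhds Filter.univ_mem hUV)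
  have hFG_eq : ∀ᶠ p : X × Y in nhds (0, 0), F (G p, p) = F (0, p) := by
    filter_upwards [hUV] with p hp
    exact (hFG _ hp.1 _ hp.2).trans (hF0 _ hp.1 _ hp.2).symm
  have hDG : HasFDerivAt G (fderiv ℝ G (0, 0)) (0, 0) :=
    (hG_at.differentiableAt one_ne_zero).hasFDerivAt
  have hcomp : DzF ∘L DyG = 0 := by
    rw [← comp_inr_eq_of_hasFDerivAt hDG hDyG, ← ContinuousLinearMap.comp_assoc,
      comp_eq_zero_of_eventually_apply_eq_const (hF_at.differentiableAt one_ne_zero) hDzF hDG hG00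
        hFG_eq, ContinuousLinearMap.zero_comp]
  have := Module.finite_of_rank_eq_nat hcodim
  have hexact : Function.Exact (DyG : Y →ₗ[ℝ] Z) (DzF : Z →ₗ[ℝ] (Fin n → ℝ)) :=
    exact_of_comp_eq_zero_of_finrank_quotient_range_eq congr(($hcomp).toLinearMap) hsurj
      (by rw [Module.finrank_eq_of_rank_eq hcodim, Module.finrank_fin_fun])
  obtain ⟨S, K, hS, hSK⟩ := exists_leftInverse_norm_le_on_ker_of_exact hinj hexact
    (.of_surjective_of_finiteDimensional hsurj)
  exact modified_implicit_function_theorem_general one_ne_zero (by simp) (hU.mem_nhds hU0)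
    (hV.mem_nhds hV0) hG_at (hF_at.hasStrictFDerivAt one_ne_zero) hG00 hFG_eq hDxG hDyG hDzF hS hSK
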